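/- Assume a−b is even and N_{m−1} ≠ 0, and let k = max{ j ∈ ℤ : N_{m−j} ≠ 0 } (so k > 0). Then for a general linear form L ∈ R_1, setting S = R/(L) ≅ K[x,y] and letting φ̄ : ⊕_{i=1}^{n+2} S(−a_i) → ⊕_{j=1}^{n} S(−b_j) be the map induced by φ, the kernel of φ̄ is a free graded S-module isomorphic to S(−(m−k)) ⊕ S(−(m+k)) (this expresses that the restriction of the associated bundle to a general line splits as O(−k) ⊕ O(k) after normalization). -/

import Mathlib

open MvPolynomial

noncomputable section

variable {K : Type*} [Field K]

/-- `p` is homogeneous of (integer) degree `d`; for `d < 0` this forces `p = 0`. -/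
def homog (p : MvPolynomial (Fin 3) K) (d : ℤ) : Prop :=
  IsWeightedHomogeneous (fun _ : Fin 3 => (1 : ℤ)) p d

/-- The degree-`d` graded piece of `⊕_{i=1}^{N} R(-a i)`, as a `K`-subspace of
`Fin N → R`, `R = K[x,y,z]`. -/
def degPiece (N : ℕ) (a : Fin N → ℤ) (d : ℤ) :
    Submodule K (Fin N → MvPolynomial (Fin 3) K) :=
  Submodule.pi Set.univ fun i =>
    weightedHomogeneousSubmodule K (fun _ : Fin 3 => (1 : ℤ)) (d - a i)

lemma mem_degPiece {N : ℕ} {a : Fin N → ℤ} {d : ℤ} {v : Fin N → MvPolynomial (Fin 3) K} :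
    v ∈ degPiece (K := K) N a d ↔ ∀ i, homog (v i) (d - a i) := by
  simp [degPiece, Submodule.mem_pi, mem_weightedHomogeneousSubmodule, homog]

/-- The map `φ : ⊕ R(-a i) → ⊕ R(-b j)` given by the matrix `Φ`, as a `K`-linear map. -/
def phiK (n : ℕ) (Φ : Matrix (Fin n) (Fin (n + 2)) (MvPolynomial (Fin 3) K)) :
    (Fin (n + 2) → MvPolynomial (Fin 3) K) →ₗ[K] (Fin n → MvPolynomial (Fin 3) K) :=
  (Matrix.mulVecLin Φ).restrictScalars K

/-- The degree-`d` graded piece of `N = ker φ`. -/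
def Nd (n : ℕ) (a : Fin (n + 2) → ℤ) (Φ : Matrix (Fin n) (Fin (n + 2)) (MvPolynomial (Fin 3) K))
    (d : ℤ) : Submodule K (Fin (n + 2) → MvPolynomial (Fin 3) K) :=
  degPiece (n + 2) a d ⊓ LinearMap.ker (phiK n Φ)

/-- The image of the degree-`d` piece of `F` inside the degree-`d` piece of `G`,
viewed as a subspace of the latter. -/
def MdSub (n : ℕ) (a : Fin (n + 2) → ℤ) (b : Fin n → ℤ)
    (Φ : Matrix (Fin n) (Fin (n + 2)) (MvPolynomial (Fin 3) K)) (d : ℤ) :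
    Submodule K ↥(degPiece (K := K) n b d) :=
  Submodule.comap (degPiece (K := K) n b d).subtype
    (Submodule.map (phiK n Φ) (degPiece (n + 2) a d))

/-- The degree-`d` graded piece of `M = coker φ`. -/
abbrev Md (n : ℕ) (a : Fin (n + 2) → ℤ) (b : Fin n → ℤ)
    (Φ : Matrix (Fin n) (Fin (n + 2)) (MvPolynomial (Fin 3) K)) (d : ℤ) :=
  ↥(degPiece (K := K) n b d) ⧸ MdSub n a b Φ d

/-- Multiplication by `L` on tuples of polynomials, as a `K`-linear map. -/
def mulL (N : ℕ) (L : MvPolynomial (Fin 3) K) :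
    (Fin N → MvPolynomial (Fin 3) K) →ₗ[K] (Fin N → MvPolynomial (Fin 3) K) :=
  ((LinearMap.lsmul (MvPolynomial (Fin 3) K) (Fin N → MvPolynomial (Fin 3) K)) L).restrictScalars K

lemma mulL_apply {N : ℕ} (L : MvPolynomial (Fin 3) K) (v : Fin N → MvPolynomial (Fin 3) K) :
    mulL N L v = L • v := rfl

lemma mulL_mem {N : ℕ} {a : Fin N → ℤ} {L : MvPolynomial (Fin 3) K} (hL : homog L 1)
    {d : ℤ} {v : Fin N → MvPolynomial (Fin 3) K} (hv : v ∈ degPiece (K := K) N a (d - 1)) :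
    mulL N L v ∈ degPiece (K := K) N a d := by
  rw [mem_degPiece] at hv ⊢
  intro i
  have h := hL.mul (hv i)
  have e : (1 : ℤ) + (d - 1 - a i) = d - a i := by ring
  rw [e] at h
  simpa [mulL_apply, smul_eq_mul, homog] using h

/-- Multiplication by `L` from the degree-`d-1` piece of `G` to the degree-`d` piece. -/
def mulLres (n : ℕ) (b : Fin n → ℤ) (L : MvPolynomial (Fin 3) K) (hL : homog L 1) (d : ℤ) :
    ↥(degPiece (K := K) n b (d - 1)) →ₗ[K] ↥(degPiece (K := K) n b d) :=
  (mulL n L).restrict fun _ hv => mulL_mem hL hv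

lemma mulLres_comap (n : ℕ) (a : Fin (n + 2) → ℤ) (b : Fin n → ℤ)
    (Φ : Matrix (Fin n) (Fin (n + 2)) (MvPolynomial (Fin 3) K))
    (L : MvPolynomial (Fin 3) K) (hL : homog L 1) (d : ℤ) :
    MdSub n a b Φ (d - 1) ≤ Submodule.comap (mulLres n b L hL d) (MdSub n a b Φ d) := by
  rintro ⟨w, hw⟩ hmem
  obtain ⟨v, hv, hφv⟩ := hmem
  refine ⟨mulL (n + 2) L v, mulL_mem hL hv, ?_⟩
  show phiK n Φ (mulL (n + 2) L v) = ((mulLres n b L hL d) ⟨w, hw⟩ : Fin n → MvPolynomial (Fin 3) K)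
  have : phiK n Φ (mulL (n + 2) L v) = L • phiK n Φ v := by
    simp [phiK, mulL_apply]
  rw [this, hφv]
  rfl

/-- The map induced by multiplication by `L` from `M_{d-1}` to `M_d`,
where `M = coker φ`. -/
def mulLmap (n : ℕ) (a : Fin (n + 2) → ℤ) (b : Fin n → ℤ)
    (Φ : Matrix (Fin n) (Fin (n + 2)) (MvPolynomial (Fin 3) K))
    (L : MvPolynomial (Fin 3) K) (hL : homog L 1) (d : ℤ) :
    Md n a b Φ (d - 1) →ₗ[K] Md n a b Φ d :=
  Submodule.mapQ (MdSub n a b Φ (d - 1)) (MdSub n a b Φ d) (mulLres n b L hL d)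
    (mulLres_comap n a b Φ L hL d)

/-- The linear form with coefficient vector `c`. -/
def linform (c : Fin 3 → K) : MvPolynomial (Fin 3) K := ∑ i, C (c i) * X i

lemma homog_linform (c : Fin 3 → K) : homog (linform c) 1 := by
  rw [homog, ← mem_weightedHomogeneousSubmodule]
  refine sum_mem fun i _ => ?_
  rw [mem_weightedHomogeneousSubmodule]
  simpa using (isWeightedHomogeneous_C (fun _ : Fin 3 => (1 : ℤ)) (c i)).mul
    (isWeightedHomogeneous_X K (fun _ : Fin 3 => (1 : ℤ)) i)

/-- Finite length of `coker φ`: all sufficiently high graded pieces vanish. -/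
def FiniteColength (n : ℕ) (a : Fin (n + 2) → ℤ) (b : Fin n → ℤ)
    (Φ : Matrix (Fin n) (Fin (n + 2)) (MvPolynomial (Fin 3) K)) : Prop :=
  ∃ D : ℤ, ∀ d : ℤ, D ≤ d →
    degPiece (K := K) n b d ≤ Submodule.map (phiK n Φ) (degPiece (n + 2) a d)

end

/-! Let `u` be a kernel element of minimal degree `d`. Its coordinates have no common prime factor,
since such a factor could be cancelled to produce a kernel element of smaller degree. This survives
restriction to a general line: a common prime factor on the line `L = 0` pulls back to a
non-irrelevant prime of height at most two that contains `L` and the coordinates of `u`, hence to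
one of the finitely many minimal primes of the ideal these coordinates generate, and a general `L`
lies in none of those.

In two variables, at the point `X 0 = 0` the matrix stays surjective and so has a kernel of
dimension two, while kernel elements vanishing there are divisible by `X 0`. Hence the Hilbert
function of the kernel grows by at most two at each step and is at least its eventual value
`2 (e + 1) - (d + d')` in every degree `e`. In degree `d'` this exceeds the dimension of the
multiples of `u`, so there is a second generator `v`. By comparison of dimensions `u` and `v` span
the kernel in large degrees, and multiplying by powers of the coprime elements `X 0` and `X 1`
carries this down to all degrees. -/

noncomputable section

/-! ## Graded pieces of free modules over a polynomial ring -/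

section Grading

variable {σ τ ι κ M R : Type*} [CommRing R]

/-- The polynomials that are homogeneous of integer degree `e`. Integer degrees let the twists
`d - a i` be negative, in which case the piece is zero. -/
abbrev homogPiece (σ R : Type*) [CommRing R] (e : ℤ) : Submodule R (MvPolynomial σ R) :=
  weightedHomogeneousSubmodule R (fun _ : σ => (1 : ℤ)) e

/-- The degree-`d` piece of the graded free module `⨁ i, R(-a i)`, over any polynomial ring and any
index type; `degPiece` is the case of three variables and indices in `Fin N`. -/
def gradedPiece (a : ι → ℤ) (d : ℤ) : Submodule R (ι → MvPolynomial σ R) :=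
  Submodule.pi Set.univ fun i => homogPiece σ R (d - a i)

/-- The projection of `⨁ i, R(-a i)` onto its degree-`d` piece. -/
def gradedComponent (a : ι → ℤ) (d : ℤ) :
    (ι → MvPolynomial σ R) →ₗ[R] (ι → MvPolynomial σ R) :=
  LinearMap.pi fun i =>
    weightedHomogeneousComponent (fun _ => (1 : ℤ)) (d - a i) ∘ₗ LinearMap.proj i

/-- The matrix `Φ` defines a degree-zero map `⨁ i, R(-a i) → ⨁ j, R(-b j)`. -/
def IsGradedMatrix (a : ι → ℤ) (b : κ → ℤ) (Φ : Matrix κ ι (MvPolynomial σ R)) : Prop :=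
  ∀ j i, Φ j i ∈ homogPiece σ R (a i - b j)

lemma finsuppWeight_one_eq_degree (s : σ →₀ ℕ) :
    Finsupp.weight (fun _ : σ => (1 : ℤ)) s = s.degree := by
  simp [Finsupp.weight_apply, Finsupp.degree_apply, Finsupp.sum]

lemma mem_homogPiece {p : MvPolynomial σ R} {e : ℤ} :
    p ∈ homogPiece σ R e ↔ ∀ s ∈ p.support, (s.degree : ℤ) = e := by
  simp [mem_weightedHomogeneousSubmodule, IsWeightedHomogeneous, finsuppWeight_one_eq_degree]

lemma homogPiece_natCast (n : ℕ) : homogPiece σ R n = homogeneousSubmodule σ R n := by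
  ext p
  refine mem_homogPiece.trans (forall_congr' fun s => ?_)
  rw [mem_support_iff, Nat.cast_inj, Finsupp.degree_eq_weight_one]
  rfl

lemma homogPiece_of_neg {e : ℤ} (he : e < 0) : homogPiece σ R e = ⊥ := by
  refine (Submodule.eq_bot_iff _).2 fun p hp => support_eq_empty.1 ?_
  refine Finset.eq_empty_of_forall_notMem fun s hs => ?_
  have := mem_homogPiece.1 hp s hs
  omega

lemma aeval_mem_homogPiece {g : σ → MvPolynomial τ R} (hg : ∀ i, (g i).IsHomogeneous 1)
    {p : MvPolynomial σ R} {e : ℤ} (hp : p ∈ homogPiece σ R e) :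
    aeval g p ∈ homogPiece τ R e := by
  obtain he | he := lt_or_ge e 0
  · rw [homogPiece_of_neg he, Submodule.mem_bot] at hp
    simp [hp]
  · lift e to ℕ using he
    rw [homogPiece_natCast, mem_homogeneousSubmodule] at hp ⊢
    simpa using hp.aeval g hg

lemma weightedHomogeneousComponent_mul_of_left_mem [AddCancelCommMonoid M] {w : σ → M} {m : M}
    {f : MvPolynomial σ R} (hf : f ∈ weightedHomogeneousSubmodule R w m) (e : M)
    (g : MvPolynomial σ R) :
    weightedHomogeneousComponent w (m + e) (f * g) =
      f * weightedHomogeneousComponent w e g := by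
  classical
  let := weightedGradedAlgebra R w
  have h (n : M) (p : MvPolynomial σ R) :
      weightedHomogeneousComponent w n p =
        DirectSum.decompose (weightedHomogeneousSubmodule R w) p n :=
    (decompose'_apply R w p n).symm
  rw [h, h, DirectSum.coe_decompose_mul_add_of_left_mem _ hf]

lemma mem_gradedPiece {a : ι → ℤ} {d : ℤ} {w : ι → MvPolynomial σ R} :
    w ∈ gradedPiece a d ↔ ∀ i, w i ∈ homogPiece σ R (d - a i) := by
  simp [gradedPiece, Submodule.mem_pi]

lemma smul_mem_gradedPiece {a : ι → ℤ} {d e : ℤ} {r : MvPolynomial σ R}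
    {w : ι → MvPolynomial σ R} (hr : r ∈ homogPiece σ R e) (hw : w ∈ gradedPiece a d) :
    r • w ∈ gradedPiece a (e + d) := by
  refine mem_gradedPiece.2 fun i => ?_
  rw [add_sub_assoc]
  exact IsWeightedHomogeneous.mul hr (mem_gradedPiece.1 hw i)

lemma gradedComponent_mem (a : ι → ℤ) (d : ℤ) (w : ι → MvPolynomial σ R) :
    gradedComponent a d w ∈ gradedPiece a d :=
  mem_gradedPiece.2 fun _ => weightedHomogeneousComponent_mem _ _ _

lemma gradedComponent_of_mem {a : ι → ℤ} {d : ℤ} {w : ι → MvPolynomial σ R}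
    (hw : w ∈ gradedPiece a d) : gradedComponent a d w = w :=
  funext fun i => weightedHomogeneousComponent_eq_self (mem_gradedPiece.1 hw i)

lemma gradedComponent_smul_of_mem {a : ι → ℤ} {d : ℤ} {u : ι → MvPolynomial σ R}
    (hu : u ∈ gradedPiece a d) (e : ℤ) (r : MvPolynomial σ R) :
    gradedComponent a e (r • u) =
      weightedHomogeneousComponent (fun _ => (1 : ℤ)) (e - d) r • u := by
  funext i
  have h := weightedHomogeneousComponent_mul_of_left_mem (mem_gradedPiece.1 hu i) (e - d) r
  rw [show d - a i + (e - d) = e - a i by ring, mul_comm, mul_comm (u i)] at h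
  exact h

lemma exists_eq_sum_gradedComponent [Finite ι] (a : ι → ℤ) (w : ι → MvPolynomial σ R) :
    ∃ F : Finset ℤ, w = ∑ d ∈ F, gradedComponent a d w := by
  have hfin : (⋃ i, Function.support fun d => gradedComponent a d w i).Finite :=
    Set.finite_iUnion fun i => (weightedHomogeneousComponent_finsupp (w i)).preimage
      (sub_left_injective (b := a i)).injOn
  refine ⟨hfin.toFinset, funext fun i => ?_⟩
  calc w i = ∑ᶠ e, weightedHomogeneousComponent (fun _ => (1 : ℤ)) e (w i) :=
        (sum_weightedHomogeneousComponent _ (w i)).symm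
    _ = ∑ᶠ d, gradedComponent a d w i := (finsum_comp_equiv (Equiv.subRight (a i))).symm
    _ = ∑ d ∈ hfin.toFinset, gradedComponent a d w i :=
        finsum_eq_sum_of_support_subset _ <| hfin.coe_toFinset.symm ▸
          Set.subset_iUnion (fun i => Function.support fun d => gradedComponent a d w i) i
    _ = (∑ d ∈ hfin.toFinset, gradedComponent a d w) i := (Finset.sum_apply _ _ _).symm

variable {a : ι → ℤ} {b : κ → ℤ} {Φ : Matrix κ ι (MvPolynomial σ R)}

lemma IsGradedMatrix.map (hΦ : IsGradedMatrix a b Φ)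
    {f : MvPolynomial σ R →ₐ[R] MvPolynomial τ R}
    (hf : ∀ e, ∀ p ∈ homogPiece σ R e, f p ∈ homogPiece τ R e) : IsGradedMatrix a b (Φ.map f) :=
  fun j i => hf _ _ (hΦ j i)

variable [Fintype ι]

lemma IsGradedMatrix.mulVec_mem (hΦ : IsGradedMatrix a b Φ) {d : ℤ} {w : ι → MvPolynomial σ R}
    (hw : w ∈ gradedPiece a d) : Φ.mulVec w ∈ gradedPiece b d := by
  refine mem_gradedPiece.2 fun j => sum_mem fun i _ => ?_
  have h := IsWeightedHomogeneous.mul (hΦ j i) (mem_gradedPiece.1 hw i)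
  rwa [show a i - b j + (d - a i) = d - b j by ring] at h

lemma IsGradedMatrix.mulVec_gradedComponent (hΦ : IsGradedMatrix a b Φ) (d : ℤ)
    (w : ι → MvPolynomial σ R) :
    Φ.mulVec (gradedComponent a d w) = gradedComponent b d (Φ.mulVec w) := by
  funext j
  have h (i : ι) := weightedHomogeneousComponent_mul_of_left_mem (hΦ j i) (d - a i) (w i)
  simp only [sub_add_sub_cancel'] at h
  simp [gradedComponent, Matrix.mulVec, dotProduct, h]

/-- The degree-`d` piece of the kernel of a matrix of polynomials; `Nd` is the case of an
`n × (n + 2)` matrix over `K[x, y, z]`. -/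
def kerPiece (a : ι → ℤ) (Φ : Matrix κ ι (MvPolynomial σ R)) (d : ℤ) :
    Submodule R (ι → MvPolynomial σ R) :=
  gradedPiece a d ⊓ LinearMap.ker (Φ.mulVecLin.restrictScalars R)

/-- The graded map with matrix `Φ` is onto in all large degrees. For a graded map between finitely
generated free modules this says that its cokernel has finite length. -/
def IsEventuallySurjective (a : ι → ℤ) (b : κ → ℤ) (Φ : Matrix κ ι (MvPolynomial σ R)) : Prop :=
  ∃ D : ℤ, ∀ d ≥ D, gradedPiece b d ≤ (gradedPiece a d).map (Φ.mulVecLin.restrictScalars R)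

lemma mem_kerPiece {d : ℤ} {w : ι → MvPolynomial σ R} :
    w ∈ kerPiece a Φ d ↔ w ∈ gradedPiece a d ∧ Φ.mulVec w = 0 :=
  Iff.rfl

lemma smul_mem_kerPiece {d e : ℤ} {r : MvPolynomial σ R} {w : ι → MvPolynomial σ R}
    (hr : r ∈ homogPiece σ R e) (hw : w ∈ kerPiece a Φ d) : r • w ∈ kerPiece a Φ (e + d) :=
  mem_kerPiece.2 ⟨smul_mem_gradedPiece hr hw.1, by
    rw [Matrix.mulVec_smul, (mem_kerPiece.1 hw).2, smul_zero]⟩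

lemma IsGradedMatrix.gradedComponent_mem_kerPiece (hΦ : IsGradedMatrix a b Φ) (d : ℤ)
    {w : ι → MvPolynomial σ R} (hw : Φ.mulVec w = 0) : gradedComponent a d w ∈ kerPiece a Φ d :=
  mem_kerPiece.2 ⟨gradedComponent_mem a d w, by
    rw [hΦ.mulVec_gradedComponent, hw, map_zero]⟩

lemma map_mem_kerPiece {f : MvPolynomial σ R →ₐ[R] MvPolynomial τ R}
    (hf : ∀ e, ∀ p ∈ homogPiece σ R e, f p ∈ homogPiece τ R e) {d : ℤ}
    {w : ι → MvPolynomial σ R} (hw : w ∈ kerPiece a Φ d) : f ∘ w ∈ kerPiece a (Φ.map f) d := by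
  refine mem_kerPiece.2 ⟨mem_gradedPiece.2 fun i => hf _ _ (mem_gradedPiece.1 hw.1 i), ?_⟩
  funext j
  calc (Φ.map f).mulVec (f ∘ w) j = f (Φ.mulVec w j) := (RingHom.map_mulVec f.toRingHom Φ w j).symm
    _ = 0 := by rw [(mem_kerPiece.1 hw).2, Pi.zero_apply, map_zero]

lemma IsEventuallySurjective.map (h : IsEventuallySurjective a b Φ)
    {f : MvPolynomial σ R →ₐ[R] MvPolynomial τ R} {g : MvPolynomial τ R →ₐ[R] MvPolynomial σ R}
    (hf : ∀ e, ∀ p ∈ homogPiece σ R e, f p ∈ homogPiece τ R e)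
    (hg : ∀ e, ∀ p ∈ homogPiece τ R e, g p ∈ homogPiece σ R e) (hfg : ∀ p, f (g p) = p) :
    IsEventuallySurjective a b (Φ.map f) := by
  obtain ⟨D, hD⟩ := h
  refine ⟨D, fun d hd w hw => ?_⟩
  obtain ⟨v, hv, hvw⟩ := hD d hd (x := g ∘ w)
    (mem_gradedPiece.2 fun j => hg _ _ (mem_gradedPiece.1 hw j))
  refine ⟨f ∘ v, mem_gradedPiece.2 fun i => hf _ _ (mem_gradedPiece.1 hv i), funext fun j => ?_⟩
  have hj : Φ.mulVec v j = g (w j) := congrFun hvw j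
  calc (Φ.map f).mulVec (f ∘ v) j = f (Φ.mulVec v j) :=
        (RingHom.map_mulVec f.toRingHom Φ v j).symm
    _ = w j := by rw [hj, hfg]

end Grading

/-! ## Primitive vectors and bases of kernels -/

section Primitive

variable {ι κ T : Type*} [CommRing T]

/-- No prime element divides all coordinates of `u`. Over a UFD, a nonzero `u` satisfies this iff
it is not a proper multiple of another vector. -/
def NoCommonPrimeFactor (u : ι → T) : Prop :=
  ∀ p, Prime p → ∃ i, ¬ p ∣ u i

/-- The vectors `u`, `v` form a basis of the kernel of `Φ`: the coordinates of `w` are the unique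
pair `rs`. -/
structure IsKernelBasis [Fintype ι] (Φ : Matrix κ ι T) (u v : ι → T) : Prop where
  mulVec_left : Φ.mulVec u = 0
  mulVec_right : Φ.mulVec v = 0
  existsUnique : ∀ w, Φ.mulVec w = 0 → ∃! rs : T × T, w = rs.1 • u + rs.2 • v

lemma NoCommonPrimeFactor.ne_zero {u : ι → T} (hu : NoCommonPrimeFactor u) {p : T} (hp : Prime p) :
    u ≠ 0 := by
  rintro rfl
  obtain ⟨_, hdvd⟩ := hu p hp
  exact hdvd (dvd_zero p)

lemma IsKernelBasis.of_linearIndependent [Fintype ι] {Φ : Matrix κ ι T} {u v : ι → T}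
    (hu : Φ.mulVec u = 0) (hv : Φ.mulVec v = 0) (hind : LinearIndependent T ![u, v])
    (hspan : ∀ w, Φ.mulVec w = 0 → w ∈ Submodule.span T {u, v}) : IsKernelBasis Φ u v := by
  refine ⟨hu, hv, fun w hw => ?_⟩
  obtain ⟨r, s, rfl⟩ := Submodule.mem_span_pair.1 (hspan w hw)
  refine ⟨(r, s), rfl, fun ⟨r', s'⟩ h => ?_⟩
  obtain ⟨rfl, rfl⟩ := hind.eq_of_pair h
  rfl

lemma IsKernelBasis.of_ringEquiv [Fintype ι] {A B : Type*} [CommRing A] [CommRing B] (e : A ≃+* B)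
    {Φ : Matrix κ ι A} {u v : ι → A} (h : IsKernelBasis (Φ.map e) (e ∘ u) (e ∘ v)) :
    IsKernelBasis Φ u v := by
  have hmulVec (w : ι → A) : Φ.mulVec w = 0 ↔ (Φ.map e).mulVec (e ∘ w) = 0 := by
    have key : (Φ.map e).mulVec (e ∘ w) = e ∘ Φ.mulVec w :=
      funext fun j => (RingHom.map_mulVec e.toRingHom Φ w j).symm
    simp [key, funext_iff]
  refine ⟨(hmulVec u).2 h.mulVec_left, (hmulVec v).2 h.mulVec_right, fun w hw => ?_⟩
  refine (Equiv.existsUnique_congr (e.toEquiv.prodCongr e.toEquiv) fun {rs} => ?_).2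
    (h.existsUnique _ ((hmulVec w).1 hw))
  simp [funext_iff, ← map_mul, ← map_add]

variable [IsDomain T] [UniqueFactorizationMonoid T]

lemma NoCommonPrimeFactor.dvd_of_dvd_mul {u : ι → T} (hu : NoCommonPrimeFactor u) {α β : T}
    (hβ : β ≠ 0) (h : ∀ i, β ∣ α * u i) : β ∣ α := by
  induction β using UniqueFactorizationMonoid.induction_on_prime generalizing α with
  | h₁ => exact absurd rfl hβ
  | h₂ x hx => exact hx.dvd
  | h₃ c p hc hp ih =>
    obtain ⟨i, hi⟩ := hu p hp
    obtain ⟨α, rfl⟩ := (hp.dvd_or_dvd ((dvd_mul_right p c).trans (h i))).resolve_right hi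
    refine mul_dvd_mul_left p (ih hc fun j => ?_)
    rw [← mul_dvd_mul_iff_left hp.ne_zero, ← mul_assoc]
    exact h j

lemma NoCommonPrimeFactor.linearIndependent_pair {u v : ι → T} (hu : NoCommonPrimeFactor u)
    (hu0 : u ≠ 0) (hv : v ∉ Submodule.span T {u}) : LinearIndependent T ![u, v] := by
  refine LinearIndependent.pair_iff.2 fun α β h => ?_
  by_cases hβ : β = 0
  · simpa [hβ, hu0] using h
  have hdvd : β ∣ α := hu.dvd_of_dvd_mul hβ fun i =>
    ⟨-v i, by simpa using eq_neg_of_add_eq_zero_left (congrFun h i)⟩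
  obtain ⟨γ, rfl⟩ := hdvd
  rw [mul_smul, ← smul_add, smul_eq_zero] at h
  have hγ : v = (-γ) • u := by
    rw [neg_smul, eq_neg_iff_add_eq_zero, add_comm, h.resolve_left hβ]
  exact absurd (Submodule.mem_span_singleton.2 ⟨-γ, hγ.symm⟩) hv

lemma mem_span_range_of_smul_mem_of_isRelPrime {V : Type*} [AddCommGroup V] [Module T V]
    [Module.IsTorsionFree T V] [Finite ι] {f : ι → V} (hf : LinearIndependent T f) {p q : T}
    (hp : p ≠ 0) (hpq : IsRelPrime p q) {w : V} (hpw : p • w ∈ Submodule.span T (Set.range f))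
    (hqw : q • w ∈ Submodule.span T (Set.range f)) : w ∈ Submodule.span T (Set.range f) := by
  have := Fintype.ofFinite ι
  obtain ⟨r, hr⟩ := (Submodule.mem_span_range_iff_exists_fun T).1 hpw
  obtain ⟨s, hs⟩ := (Submodule.mem_span_range_iff_exists_fun T).1 hqw
  have hcomb : ∑ i, (q * r i) • f i = ∑ i, (p * s i) • f i := by
    simp only [mul_smul, ← Finset.smul_sum, hr, hs]
    exact smul_comm q p w
  have hdvd (i : ι) : p ∣ r i := hpq.dvd_of_dvd_mul_left
    ⟨s i, Fintype.linearIndependent_iffₛ.1 hf _ _ hcomb i⟩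
  choose t ht using hdvd
  refine (Submodule.mem_span_range_iff_exists_fun T).2 ⟨t, smul_right_injective V hp ?_⟩
  simp only [Finset.smul_sum, smul_smul, ← ht, hr]

end Primitive

section Minimal

variable {σ ι κ K : Type*} [Field K] [Fintype ι] {a : ι → ℤ} {b : κ → ℤ}
  {Φ : Matrix κ ι (MvPolynomial σ K)}

lemma totalDegree_of_mem_homogPiece {p : MvPolynomial σ K} {e : ℤ} (hp : p ∈ homogPiece σ K e)
    (hp0 : p ≠ 0) : (p.totalDegree : ℤ) = e := by
  obtain ⟨s, hs⟩ := support_nonempty.2 hp0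
  have he := mem_homogPiece.1 hp s hs
  rw [← he, homogPiece_natCast] at hp
  rw [← he, IsHomogeneous.totalDegree hp hp0]

lemma totalDegree_pos_of_prime {p : MvPolynomial σ K} (hp : Prime p) : 0 < p.totalDegree := by
  refine Nat.pos_of_ne_zero fun h => hp.not_isUnit ?_
  obtain ⟨c, rfl⟩ : ∃ c, p = C c := ⟨_, totalDegree_eq_zero_iff_eq_C.1 h⟩
  exact (isUnit_iff_ne_zero.2 fun hc => hp.ne_zero (by rw [hc, C_0])).map C

lemma IsGradedMatrix.noCommonPrimeFactor_of_minimal (hΦ : IsGradedMatrix a b Φ) {d : ℤ}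
    (hmin : ∀ e < d, kerPiece a Φ e = ⊥) {u : ι → MvPolynomial σ K} (hu : u ∈ kerPiece a Φ d)
    (hu0 : u ≠ 0) : NoCommonPrimeFactor u := by
  intro p hp
  by_contra! hdvd
  choose w hw using hdvd
  obtain rfl : u = p • w := funext hw
  have hΦw : Φ.mulVec w = 0 := by
    have hker := (mem_kerPiece.1 hu).2
    rw [Matrix.mulVec_smul] at hker
    exact (smul_eq_zero.1 hker).resolve_left hp.ne_zero
  obtain ⟨i, hi⟩ := Function.ne_iff.1 (smul_ne_zero_iff.1 hu0).2
  obtain ⟨s, hs⟩ := support_nonempty.2 hi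
  have hdeg : ((p.totalDegree + (w i).totalDegree : ℕ) : ℤ) = d - a i := by
    rw [← totalDegree_mul_of_isDomain hp.ne_zero hi]
    exact totalDegree_of_mem_homogPiece (mem_gradedPiece.1 hu.1 i) (mul_ne_zero hp.ne_zero hi)
  have hlt : s.degree + a i < d := by
    have hp_pos := totalDegree_pos_of_prime hp
    have hs_le : s.degree ≤ (w i).totalDegree := le_totalDegree hs
    omega
  have hzero : gradedComponent a (s.degree + a i) w = 0 := by
    simpa [hmin _ hlt] using hΦ.gradedComponent_mem_kerPiece (s.degree + a i) hΦw
  refine mem_support_iff.1 hs ?_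
  simpa [gradedComponent, coeff_weightedHomogeneousComponent, finsuppWeight_one_eq_degree]
    using congrArg (coeff s) (congrFun hzero i)

end Minimal

/-! ## Hilbert functions of kernels in two variables -/

section HilbertFunction

variable {σ ι κ K : Type*} [Field K]

lemma finrank_homogeneousSubmodule (σ : Type*) [Fintype σ] (n : ℕ) :
    Module.finrank K (homogeneousSubmodule σ K n) = (Fintype.card σ).multichoose n := by
  classical
  have hset : {s : σ →₀ ℕ | s.degree = n} = (Finset.univ.finsuppAntidiag n : Finset (σ →₀ ℕ)) := by
    ext s
    simp [Finsupp.degree_eq_sum]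
  rw [homogeneousSubmodule_eq_finsupp_supported, hset]
  refine (Module.finrank_eq_nat_card_basis (basisRestrictSupport K _)).trans ?_
  rw [Nat.card_coe_set_eq, Set.ncard_coe_finset, Finset.card_finsuppAntidiag_nat_eq_multichoose,
    Finset.card_univ]

lemma finrank_homogPiece_fin_two (e : ℤ) :
    Module.finrank K (homogPiece (Fin 2) K e) = (e + 1).toNat := by
  obtain he | he := lt_or_ge e 0
  · rw [homogPiece_of_neg he, finrank_bot]
    omega
  · lift e to ℕ using he
    rw [homogPiece_natCast, finrank_homogeneousSubmodule, Fintype.card_fin, Nat.multichoose_two]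
    rfl

instance finite_homogPiece [Finite σ] (e : ℤ) : Module.Finite K (homogPiece σ K e) := by
  obtain he | he := lt_or_ge e 0
  · rw [homogPiece_of_neg he]
    infer_instance
  · lift e to ℕ using he
    rw [homogPiece_natCast]
    exact Module.Finite.iff_fg.2 (homogeneousSubmodule_fg ..)

/-- The degree-`d` piece of `⨁ i, R(-a i)` is the product of the degree-`d` pieces of the
summands. -/
def gradedPieceEquivPi (a : ι → ℤ) (d : ℤ) :
    gradedPiece (σ := σ) (R := K) a d ≃ₗ[K] ∀ i, homogPiece σ K (d - a i) where
  toFun v i := ⟨v.1 i, mem_gradedPiece.1 v.2 i⟩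
  invFun f := ⟨fun i => (f i).1, mem_gradedPiece.2 fun i => (f i).2⟩
  map_add' _ _ := rfl
  map_smul' _ _ := rfl

instance finite_gradedPiece [Finite σ] [Finite ι] (a : ι → ℤ) (d : ℤ) :
    Module.Finite K (gradedPiece (σ := σ) (R := K) a d) :=
  Module.Finite.equiv (gradedPieceEquivPi a d).symm

lemma finrank_gradedPiece_of_le [Fintype ι] {a : ι → ℤ} {d : ℤ} (h : ∀ i, a i ≤ d) :
    (Module.finrank K (gradedPiece (σ := Fin 2) (R := K) a d) : ℤ) =
      Fintype.card ι * (d + 1) - ∑ i, a i := by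
  have hterm (i : ι) : (((d - a i + 1).toNat : ℕ) : ℤ) = d + 1 - a i := by
    have := h i
    omega
  rw [(gradedPieceEquivPi a d).finrank_eq, Module.finrank_pi_fintype]
  simp [finrank_homogPiece_fin_two, hterm]

lemma finrank_map_add_finrank_inf_ker {V W : Type*} [AddCommGroup V] [Module K V] [AddCommGroup W]
    [Module K W] (f : V →ₗ[K] W) (p : Submodule K V) [Module.Finite K p] :
    Module.finrank K (p.map f) + Module.finrank K (p ⊓ LinearMap.ker f : Submodule K V) =
      Module.finrank K p := by
  have h := LinearMap.finrank_range_add_finrank_ker (f.domRestrict p)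
  rwa [LinearMap.range_domRestrict, LinearMap.ker_domRestrict,
    ← Submodule.finrank_map_subtype_eq, Submodule.map_comap_subtype] at h

variable [Fintype ι] {a : ι → ℤ} {b : κ → ℤ}

instance finite_kerPiece [Finite σ] (a : ι → ℤ) (Φ : Matrix κ ι (MvPolynomial σ K)) (d : ℤ) :
    Module.Finite K (kerPiece a Φ d) :=
  Submodule.finiteDimensional_of_le inf_le_left

open Filter in
lemma IsGradedMatrix.eventually_finrank_kerPiece [Fintype κ]
    {Φ : Matrix κ ι (MvPolynomial (Fin 2) K)} (hΦ : IsGradedMatrix a b Φ)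
    (hsurj : IsEventuallySurjective a b Φ) :
    ∀ᶠ d in atTop, (Module.finrank K (kerPiece a Φ d) : ℤ) =
      (Fintype.card ι - Fintype.card κ) * (d + 1) - (∑ i, a i - ∑ j, b j) := by
  filter_upwards [eventually_atTop.2 hsurj, eventually_all.2 fun i => eventually_ge_atTop (a i),
    eventually_all.2 fun j => eventually_ge_atTop (b j)] with d hd ha hb
  have himage : (gradedPiece a d).map (Φ.mulVecLin.restrictScalars K) = gradedPiece b d :=
    le_antisymm (Submodule.map_le_iff_le_comap.2 fun _ hw => hΦ.mulVec_mem hw) hd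
  have hrank : Module.finrank K (gradedPiece (σ := Fin 2) (R := K) b d) +
      Module.finrank K (kerPiece a Φ d) =
      Module.finrank K (gradedPiece (σ := Fin 2) (R := K) a d) := by
    rw [← himage]
    exact finrank_map_add_finrank_inf_ker _ _
  zify [finrank_gradedPiece_of_le ha, finrank_gradedPiece_of_le hb] at hrank
  linear_combination hrank

end HilbertFunction

section Evaluation

variable {σ ι κ R K : Type*} [CommRing R] [Field K] [Fintype ι] {a : ι → ℤ} {b : κ → ℤ}

lemma IsEventuallySurjective.surjective_mulVec_eval [Finite κ] {Φ : Matrix κ ι (MvPolynomial σ R)}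
    [DecidableEq σ] (h : IsEventuallySurjective a b Φ) (i : σ) :
    Function.Surjective (Φ.map (eval (Pi.single i 1))).mulVec := by
  intro y
  obtain ⟨d, hd, hb⟩ := ((Filter.eventually_atTop.2 h).and
    (Filter.eventually_all.2 fun j => Filter.eventually_ge_atTop (b j))).exists
  obtain ⟨w, -, hw⟩ := hd (x := fun j => C (y j) * X i ^ (d - b j).toNat) <|
    mem_gradedPiece.2 fun j => by
      simpa [Int.toNat_of_nonneg (sub_nonneg.2 (hb j))] using
        ((isWeightedHomogeneous_X R (fun _ : σ => (1 : ℤ)) i).pow (d - b j).toNat).C_mul (y j)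
  refine ⟨eval (Pi.single i 1) ∘ w, funext fun j => ?_⟩
  calc (Φ.map (eval (Pi.single i 1))).mulVec (eval (Pi.single i 1) ∘ w) j
      = eval (Pi.single i 1) (Φ.mulVec w j) := (RingHom.map_mulVec _ Φ w j).symm
    _ = eval (Pi.single i 1) (C (y j) * X i ^ (d - b j).toNat) := congrArg _ (congrFun hw j)
    _ = y j := by simp

lemma eval_single_one_of_isHomogeneous [DecidableEq σ] {p : MvPolynomial σ R} {n : ℕ}
    (hp : p.IsHomogeneous n) (i : σ) :
    eval (Pi.single i 1) p = coeff (Finsupp.single i n) p := by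
  rw [eval_eq, Finset.sum_eq_single (Finsupp.single i n)]
  · rw [Finset.prod_eq_one, mul_one]
    intro j hj
    obtain rfl := Finset.mem_singleton.1 (Finsupp.support_single_subset hj)
    simp
  · intro s hs hne
    obtain ⟨j, hj, hji⟩ : ∃ j ∈ s.support, j ≠ i := by
      by_contra! hsub
      obtain ⟨m, rfl⟩ := Finsupp.support_subset_singleton'.1 fun j hj =>
        Finset.mem_singleton.2 (hsub j hj)
      have hm : m = n := by simpa [Finsupp.weight_single] using hp (mem_support_iff.1 hs)
      exact hne (by rw [hm])
    rw [Finset.prod_eq_zero hj, mul_zero]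
    rw [Pi.single_eq_of_ne hji, zero_pow (Finsupp.mem_support_iff.1 hj)]
  · intro hs
    rw [notMem_support_iff.1 hs, zero_mul]

lemma X_dvd_of_eval_eq_zero {p : MvPolynomial (Fin 2) R} {e : ℤ} (hp : p ∈ homogPiece (Fin 2) R e)
    (h : eval (Pi.single 1 1) p = 0) : X 0 ∣ p := by
  rw [← Ideal.mem_span_singleton, ← Set.image_singleton, mem_ideal_span_X_image]
  refine fun s hs => ⟨0, rfl, fun hs0 => mem_support_iff.1 hs ?_⟩
  have he := mem_homogPiece.1 hp s hs
  rw [← he, homogPiece_natCast] at hp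
  have hs_eq : s = Finsupp.single 1 s.degree := by
    ext i
    fin_cases i <;> simp [Finsupp.degree_eq_sum, hs0]
  rw [hs_eq, ← eval_single_one_of_isHomogeneous hp, h]

lemma mem_homogPiece_of_X_mul {p : MvPolynomial σ R} {e : ℤ} {i : σ}
    (h : X i * p ∈ homogPiece σ R e) : p ∈ homogPiece σ R (e - 1) := by
  refine mem_homogPiece.2 fun s hs => ?_
  have hdeg := mem_homogPiece.1 h (Finsupp.single i 1 + s)
    (by rwa [mem_support_iff, coeff_X_mul, ← mem_support_iff])
  simp only [map_add, Finsupp.degree_single, Nat.cast_add, Nat.cast_one] at hdeg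
  omega

lemma map_eval_kerPiece_le (Φ : Matrix κ ι (MvPolynomial σ R)) (x : σ → R) (d : ℤ) :
    (kerPiece a Φ d).map ((aeval x).toLinearMap.compLeft ι) ≤
      LinearMap.ker (Φ.map (eval x)).mulVecLin := by
  rintro _ ⟨w, hw, rfl⟩
  refine LinearMap.mem_ker.2 (funext fun j => ?_)
  calc (Φ.map (eval x)).mulVec (eval x ∘ w) j = eval x (Φ.mulVec w j) :=
        (RingHom.map_mulVec _ Φ w j).symm
    _ = 0 := by rw [(mem_kerPiece.1 hw).2, Pi.zero_apply, map_zero]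

lemma kerPiece_inf_ker_eval_le (Φ : Matrix κ ι (MvPolynomial (Fin 2) K)) (d : ℤ) :
    kerPiece a Φ d ⊓ LinearMap.ker ((aeval (Pi.single 1 (1 : K))).toLinearMap.compLeft ι) ≤
      (kerPiece a Φ (d - 1)).map
        (DistribSMul.toLinearMap K _ (X 0 : MvPolynomial (Fin 2) K)) := by
  rintro w ⟨⟨hw, hΦw⟩, hev⟩
  have hdvd (i : ι) : X 0 ∣ w i := X_dvd_of_eval_eq_zero (mem_gradedPiece.1 hw i) (congrFun hev i)
  choose q hq using hdvd
  obtain rfl : w = (X 0 : MvPolynomial (Fin 2) K) • q := funext hq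
  refine ⟨q, mem_kerPiece.2 ⟨mem_gradedPiece.2 fun i => ?_, ?_⟩, rfl⟩
  · rw [sub_right_comm]
    exact mem_homogPiece_of_X_mul (mem_gradedPiece.1 hw i)
  · have hker : Φ.mulVec ((X 0 : MvPolynomial (Fin 2) K) • q) = 0 := hΦw
    rw [Matrix.mulVec_smul] at hker
    exact (smul_eq_zero.1 hker).resolve_left (X_ne_zero 0)

variable [Fintype κ] {Φ : Matrix κ ι (MvPolynomial (Fin 2) K)}

lemma IsEventuallySurjective.finrank_kerPiece_add_card_le (hsurj : IsEventuallySurjective a b Φ)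
    (d : ℤ) :
    Module.finrank K (kerPiece a Φ d) + Fintype.card κ ≤
      Module.finrank K (kerPiece a Φ (d - 1)) + Fintype.card ι := by
  have hrank := finrank_map_add_finrank_inf_ker
    ((aeval (Pi.single 1 (1 : K))).toLinearMap.compLeft ι) (kerPiece a Φ d)
  have himage := Submodule.finrank_mono (map_eval_kerPiece_le (a := a) Φ (Pi.single 1 1) d)
  have hker := (Submodule.finrank_mono (kerPiece_inf_ker_eval_le (a := a) Φ d)).trans
    (Submodule.finrank_map_le _ _)
  have heval := LinearMap.finrank_range_add_finrank_ker (Φ.map (eval (Pi.single 1 1))).mulVecLin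
  rw [LinearMap.range_eq_top.2 (hsurj.surjective_mulVec_eval 1), finrank_top,
    Module.finrank_fintype_fun_eq_card, Module.finrank_fintype_fun_eq_card] at heval
  omega

lemma IsGradedMatrix.le_finrank_kerPiece (hΦ : IsGradedMatrix a b Φ)
    (hsurj : IsEventuallySurjective a b Φ) (d : ℤ) :
    (Fintype.card ι - Fintype.card κ) * (d + 1) - (∑ i, a i - ∑ j, b j) ≤
      (Module.finrank K (kerPiece a Φ d) : ℤ) := by
  obtain ⟨D, hD, hdD⟩ := ((hΦ.eventually_finrank_kerPiece hsurj).and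
    (Filter.eventually_ge_atTop d)).exists
  induction d, hdD using Int.leInductionDown with
  | base => exact hD.ge
  | pred d _ ih =>
    have hstep := hsurj.finrank_kerPiece_add_card_le d
    zify at hstep
    linarith

end Evaluation

/-! ## Kernels of rank two in two variables -/

section RankTwo

variable {ι κ K : Type*} [Field K] [Fintype ι] {a : ι → ℤ}
  {Ψ : Matrix κ ι (MvPolynomial (Fin 2) K)} {d d' : ℤ} {u v : ι → MvPolynomial (Fin 2) K}

lemma mem_span_of_mem_kerPiece_of_finrank_eq (hu : u ∈ kerPiece a Ψ d) (hv : v ∈ kerPiece a Ψ d')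
    (hind : LinearIndependent (MvPolynomial (Fin 2) K) ![u, v]) {e : ℤ} (hde : d ≤ e)
    (hd'e : d' ≤ e) (hrank : (Module.finrank K (kerPiece a Ψ e) : ℤ) = 2 * (e + 1) - (d + d'))
    {w : ι → MvPolynomial (Fin 2) K} (hw : w ∈ kerPiece a Ψ e) :
    w ∈ Submodule.span (MvPolynomial (Fin 2) K) {u, v} := by
  let combine : homogPiece (Fin 2) K (e - d) × homogPiece (Fin 2) K (e - d') →ₗ[K]
      (ι → MvPolynomial (Fin 2) K) :=
    ((LinearMap.toSpanSingleton (MvPolynomial (Fin 2) K) _ u).restrictScalars K ∘ₗ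
      Submodule.subtype _).coprod
    ((LinearMap.toSpanSingleton (MvPolynomial (Fin 2) K) _ v).restrictScalars K ∘ₗ
      Submodule.subtype _)
  have hinj : Function.Injective combine := fun x y hxy => by
    obtain ⟨h₁, h₂⟩ := hind.eq_of_pair hxy
    exact Prod.ext (Subtype.ext h₁) (Subtype.ext h₂)
  have hrange : LinearMap.range combine ≤ kerPiece a Ψ e := by
    rintro _ ⟨x, rfl⟩
    have hxu := smul_mem_kerPiece x.1.2 hu
    have hxv := smul_mem_kerPiece x.2.2 hv
    rw [sub_add_cancel] at hxu hxv
    exact add_mem hxu hxv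
  have heq : LinearMap.range combine = kerPiece a Ψ e := by
    refine Submodule.eq_of_le_of_finrank_eq hrange ?_
    rw [LinearMap.finrank_range_of_inj hinj, Module.finrank_prod, finrank_homogPiece_fin_two,
      finrank_homogPiece_fin_two]
    omega
  obtain ⟨x, rfl⟩ := heq.ge hw
  exact Submodule.mem_span_pair.2 ⟨x.1, x.2, rfl⟩

lemma isRelPrime_X_pow (n : ℕ) :
    IsRelPrime (X 0 ^ n : MvPolynomial (Fin 2) K) (X 1 ^ n) := by
  refine IsRelPrime.pow ((X_prime).irreducible.isRelPrime_iff_not_dvd.2 ?_)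
  simp [X_dvd_X]

lemma X_pow_mem_homogPiece {σ R : Type*} [CommRing R] (i : σ) (n : ℕ) :
    (X i ^ n : MvPolynomial σ R) ∈ homogPiece σ R n := by
  rw [homogPiece_natCast]
  exact isHomogeneous_X_pow i n

variable [Fintype κ] {b : κ → ℤ}

lemma IsGradedMatrix.exists_mem_kerPiece_notMem_span (hΨ : IsGradedMatrix a b Ψ)
    (hsurj : IsEventuallySurjective a b Ψ) (hcard : Fintype.card ι = Fintype.card κ + 2)
    (hdd' : ∑ i, a i - ∑ j, b j = d + d') (hle : d ≤ d' + 1) (hu : u ∈ gradedPiece a d) :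
    ∃ v ∈ kerPiece a Ψ d', v ∉ Submodule.span (MvPolynomial (Fin 2) K) {u} := by
  by_contra! hspan
  let smulU := (LinearMap.toSpanSingleton (MvPolynomial (Fin 2) K) _ u).restrictScalars K
  have hsub : kerPiece a Ψ d' ≤ (homogPiece (Fin 2) K (d' - d)).map smulU := by
    intro v hv
    obtain ⟨r, rfl⟩ := Submodule.mem_span_singleton.1 (hspan v hv)
    refine ⟨weightedHomogeneousComponent (fun _ => (1 : ℤ)) (d' - d) r,
      weightedHomogeneousComponent_mem _ _ _, ?_⟩
    exact (gradedComponent_smul_of_mem hu d' r).symm.trans (gradedComponent_of_mem hv.1)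
  have hupper := (Submodule.finrank_mono hsub).trans (Submodule.finrank_map_le _ _)
  have hlower := hΨ.le_finrank_kerPiece hsurj d'
  rw [finrank_homogPiece_fin_two] at hupper
  rw [hdd', hcard] at hlower
  push_cast at hlower
  have : d' - d + 2 ≤ (Module.finrank K (kerPiece a Ψ d') : ℤ) := by linarith
  omega

lemma IsGradedMatrix.mem_span_of_mulVec_eq_zero (hΨ : IsGradedMatrix a b Ψ)
    (hsurj : IsEventuallySurjective a b Ψ) (hcard : Fintype.card ι = Fintype.card κ + 2)
    (hdd' : ∑ i, a i - ∑ j, b j = d + d') (hu : u ∈ kerPiece a Ψ d) (hv : v ∈ kerPiece a Ψ d')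
    (hind : LinearIndependent (MvPolynomial (Fin 2) K) ![u, v]) {w : ι → MvPolynomial (Fin 2) K}
    (hw : Ψ.mulVec w = 0) : w ∈ Submodule.span (MvPolynomial (Fin 2) K) {u, v} := by
  obtain ⟨D, hD⟩ := Filter.eventually_atTop.1 (hΨ.eventually_finrank_kerPiece hsurj)
  have hlarge (e : ℤ) (he : D ≤ e ∧ d ≤ e ∧ d' ≤ e) (w : ι → MvPolynomial (Fin 2) K)
      (hw : w ∈ kerPiece a Ψ e) : w ∈ Submodule.span (MvPolynomial (Fin 2) K) {u, v} := by
    refine mem_span_of_mem_kerPiece_of_finrank_eq hu hv hind he.2.1 he.2.2 ?_ hw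
    rw [hD e he.1, hdd', hcard]
    push_cast
    ring
  obtain ⟨F, hF⟩ := exists_eq_sum_gradedComponent a w
  rw [hF]
  refine sum_mem fun e _ => ?_
  have he := hΨ.gradedComponent_mem_kerPiece e hw
  obtain ⟨n, hn⟩ : ∃ n : ℕ, D ≤ n + e ∧ d ≤ n + e ∧ d' ≤ n + e :=
    ⟨(max D (max d d') - e).toNat, by omega⟩
  have hX (i : Fin 2) := hlarge _ hn _ (smul_mem_kerPiece (X_pow_mem_homogPiece i n) he)
  simp only [← Matrix.range_cons_cons_empty u v ![]] at hX ⊢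
  exact mem_span_range_of_smul_mem_of_isRelPrime hind (pow_ne_zero n (X_ne_zero 0))
    (isRelPrime_X_pow n) (hX 0) (hX 1)

theorem IsGradedMatrix.exists_isKernelBasis (hΨ : IsGradedMatrix a b Ψ)
    (hsurj : IsEventuallySurjective a b Ψ) (hcard : Fintype.card ι = Fintype.card κ + 2)
    (hdd' : ∑ i, a i - ∑ j, b j = d + d') (hle : d ≤ d' + 1) (hu : u ∈ kerPiece a Ψ d)
    (hprim : NoCommonPrimeFactor u) :
    ∃ v ∈ kerPiece a Ψ d', IsKernelBasis Ψ u v := by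
  obtain ⟨v, hv, hvu⟩ := hΨ.exists_mem_kerPiece_notMem_span hsurj hcard hdd' hle hu.1
  have hind := hprim.linearIndependent_pair (hprim.ne_zero (X_prime (i := 0))) hvu
  exact ⟨v, hv, .of_linearIndependent hu.2 hv.2 hind fun w hw =>
    hΨ.mem_span_of_mulVec_eq_zero hsurj hcard hdd' hu hv hind hw⟩

end RankTwo

/-! ## Restriction to a general line -/

section Height

variable {ι T : Type*} [CommRing T] [IsDomain T] [UniqueFactorizationMonoid T]

lemma NoCommonPrimeFactor.two_le_height_span {u : ι → T} (hu : NoCommonPrimeFactor u)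
    (hu0 : u ≠ 0) : 2 ≤ (Ideal.span (Set.range u)).height := by
  rw [Ideal.height_eq_inf_minimalPrimes]
  refine le_iInf₂ fun P hPmin => ?_
  have hP : P.IsPrime := hPmin.1.1
  have huP (i : ι) : u i ∈ P := hPmin.1.2 (Ideal.subset_span ⟨i, rfl⟩)
  have hP0 : P ≠ ⊥ := by
    rintro rfl
    exact hu0 (funext huP)
  obtain ⟨x, hxP, hx⟩ := hP.exists_mem_prime_of_ne_bot hP0
  obtain ⟨i, hi⟩ := hu x hx
  have := (Ideal.span_singleton_prime hx.ne_zero).2 hx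
  have hlt : Ideal.span {x} < P :=
    lt_of_le_of_ne ((Ideal.span_singleton_le_iff_mem P).2 hxP) fun h =>
      hi (Ideal.mem_span_singleton.1 (h ▸ huP i))
  calc (2 : ℕ∞) = 1 + 1 := one_add_one_eq_two.symm
    _ ≤ (Ideal.span {x}).height + 1 := by
      gcongr
      exact Ideal.one_le_height_span_singleton_of_mem_nonZeroDivisors
        (mem_nonZeroDivisors_of_ne_zero hx.ne_zero)
    _ ≤ P.height := Ideal.height_add_one_le_of_lt_of_isPrime hlt

end Height

section GeneralLine

variable {K : Type*} [Field K]

lemma eval_linform (c e : Fin 3 → K) : eval c (linform e) = ∑ i, e i * c i := by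
  simp [linform]

lemma linform_eq_linearCombination (c : Fin 3 → K) :
    linform c = Fintype.linearCombination K (X : Fin 3 → MvPolynomial (Fin 3) K) c := by
  simp [linform, Fintype.linearCombination_apply, smul_eq_C_mul]

lemma exists_ne_zero_forall_linform_notMem (p : Ideal (MvPolynomial (Fin 3) K))
    (hp : ∃ i, X i ∉ p) :
    ∃ Q : MvPolynomial (Fin 3) K, Q ≠ 0 ∧ ∀ c, eval c Q ≠ 0 → linform c ∉ p := by
  let W : Submodule K (Fin 3 → K) :=
    (p.restrictScalars K).comap (Fintype.linearCombination K X)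
  have hW : W < ⊤ := by
    obtain ⟨i, hi⟩ := hp
    refine lt_top_iff_ne_top.2 fun h => hi ?_
    have hmem : Pi.single i (1 : K) ∈ W := h ▸ Submodule.mem_top
    simpa [W] using hmem
  obtain ⟨f, hf0, hf⟩ := W.exists_le_ker_of_lt_top hW
  have heval (c : Fin 3 → K) : eval c (linform fun i => f (Pi.single i 1)) = f c := by
    rw [eval_linform]
    conv_rhs => rw [pi_eq_sum_univ' c]
    simp only [map_sum, map_smul, smul_eq_mul, mul_comm]
  refine ⟨linform fun i => f (Pi.single i 1), fun h => hf0 ?_, fun c hc hcp => hc ?_⟩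
  · exact LinearMap.ext fun c => by rw [← heval, h, map_zero, LinearMap.zero_apply]
  · rw [linform_eq_linearCombination] at hcp
    rw [heval]
    exact hf hcp

lemma exists_ne_zero_forall_linform_notMem_of_finite {S : Set (Ideal (MvPolynomial (Fin 3) K))}
    (hS : S.Finite) (hX : ∀ p ∈ S, ∃ i, X i ∉ p) :
    ∃ Q : MvPolynomial (Fin 3) K, Q ≠ 0 ∧ ∀ c, eval c Q ≠ 0 → ∀ p ∈ S, linform c ∉ p := by
  have := hS.fintype
  choose Q hQ0 hQ using fun p : S => exists_ne_zero_forall_linform_notMem p.1 (hX p p.2)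
  refine ⟨∏ p, Q p, Finset.prod_ne_zero_iff.2 fun p _ => hQ0 p, fun c hc p hp => hQ ⟨p, hp⟩ c ?_⟩
  rw [map_prod] at hc
  exact Finset.prod_ne_zero_iff.1 hc _ (Finset.mem_univ _)

/-- Restriction of polynomials to the line `linform c = 0`, parametrized by the last two
coordinates. Meaningful only if `c 0 ≠ 0`. -/
def restrictLine (c : Fin 3 → K) : MvPolynomial (Fin 3) K →ₐ[K] MvPolynomial (Fin 2) K :=
  aeval ![-(C (c 1 / c 0) * X 0 + C (c 2 / c 0) * X 1), X 0, X 1]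

/-- The section of every `restrictLine c` that views a polynomial in two variables as a polynomial
in the last two of three variables. -/
def extendLine (K : Type*) [Field K] : MvPolynomial (Fin 2) K →ₐ[K] MvPolynomial (Fin 3) K :=
  aeval ![X 1, X 2]

lemma restrictLine_extendLine (c : Fin 3 → K) (p : MvPolynomial (Fin 2) K) :
    restrictLine c (extendLine K p) = p := by
  have h : (restrictLine c).comp (extendLine K) = AlgHom.id K _ := by
    ext i : 1
    fin_cases i <;> simp [restrictLine, extendLine]
  exact DFunLike.congr_fun h p

lemma restrictLine_surjective (c : Fin 3 → K) : Function.Surjective (restrictLine c) :=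
  fun p => ⟨extendLine K p, restrictLine_extendLine c p⟩

lemma restrictLine_mem_homogPiece (c : Fin 3 → K) (e : ℤ) (p : MvPolynomial (Fin 3) K)
    (hp : p ∈ homogPiece (Fin 3) K e) : restrictLine c p ∈ homogPiece (Fin 2) K e := by
  refine aeval_mem_homogPiece (fun i => ?_) hp
  fin_cases i
  · exact ((isHomogeneous_C_mul_X _ _).add (isHomogeneous_C_mul_X _ _)).neg
  · exact isHomogeneous_X K 0
  · exact isHomogeneous_X K 1

lemma extendLine_mem_homogPiece (e : ℤ) (p : MvPolynomial (Fin 2) K)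
    (hp : p ∈ homogPiece (Fin 2) K e) : extendLine K p ∈ homogPiece (Fin 3) K e := by
  refine aeval_mem_homogPiece (fun i => ?_) hp
  fin_cases i
  · exact isHomogeneous_X K 1
  · exact isHomogeneous_X K 2

variable {c : Fin 3 → K}

lemma C_mul_C_div {σ : Type*} {x : K} (hx : x ≠ 0) (y : K) :
    (C x * C (y / x) : MvPolynomial σ K) = C y := by
  rw [← C_mul, mul_div_cancel₀ y hx]

lemma restrictLine_linform (hc : c 0 ≠ 0) : restrictLine c (linform c) = 0 := by
  simp only [linform, Fin.sum_univ_three, restrictLine, map_add, map_mul, aeval_X, aeval_C,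
    algebraMap_eq, Matrix.cons_val_zero, Matrix.cons_val_one, Matrix.cons_val]
  linear_combination -X 0 * C_mul_C_div hc (c 1) - X 1 * C_mul_C_div hc (c 2)

lemma extendLine_restrictLine_sub_mem (hc : c 0 ≠ 0) (p : MvPolynomial (Fin 3) K) :
    extendLine K (restrictLine c p) - p ∈ Ideal.span {linform c} := by
  have hmk : (Ideal.Quotient.mkₐ K (Ideal.span {linform c})).comp
      ((extendLine K).comp (restrictLine c)) = Ideal.Quotient.mkₐ K (Ideal.span {linform c}) := by
    ext i : 1
    simp only [AlgHom.comp_apply, Ideal.Quotient.mkₐ_eq_mk]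
    rw [Ideal.Quotient.eq, Ideal.mem_span_singleton']
    fin_cases i
    · refine ⟨-C (c 0)⁻¹, ?_⟩
      have hC : (C (c 0) * C (c 0)⁻¹ : MvPolynomial (Fin 3) K) = 1 := by
        rw [← C_mul, mul_inv_cancel₀ hc, C_1]
      simp only [linform, Fin.sum_univ_three, restrictLine, extendLine, Fin.zero_eta, aeval_X,
        map_add, map_neg, map_mul, aeval_C, algebraMap_eq, div_eq_mul_inv,
        Matrix.cons_val_zero, Matrix.cons_val_one]
      linear_combination -X 0 * hC
    · exact ⟨0, by simp [restrictLine, extendLine]⟩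
    · exact ⟨0, by simp [restrictLine, extendLine]⟩
  exact Ideal.Quotient.eq.1 (DFunLike.congr_fun hmk p)

lemma ker_restrictLine (hc : c 0 ≠ 0) :
    RingHom.ker (restrictLine c) = Ideal.span {linform c} := by
  refine le_antisymm (fun p hp => ?_) ?_
  · simpa [(RingHom.mem_ker).1 hp] using extendLine_restrictLine_sub_mem hc p
  · rw [Ideal.span_singleton_le_iff_mem, RingHom.mem_ker, restrictLine_linform hc]

/-- Coordinates on the line `linform c = 0`: its coordinate ring is a polynomial ring in two
variables. -/
def quotientLinformEquiv (hc : c 0 ≠ 0) :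
    (MvPolynomial (Fin 3) K ⧸ Ideal.span {linform c}) ≃+* MvPolynomial (Fin 2) K :=
  ((Ideal.quotientEquivAlgOfEq K (ker_restrictLine hc).symm).trans
    (Ideal.quotientKerAlgEquivOfSurjective (restrictLine_surjective c))).toRingEquiv

lemma isKernelBasis_quotientMk_linform {ι κ : Type*} [Fintype ι] (hc : c 0 ≠ 0)
    {Φ : Matrix κ ι (MvPolynomial (Fin 3) K)} {u v : ι → MvPolynomial (Fin 3) K}
    (h : IsKernelBasis (Φ.map (restrictLine c)) (restrictLine c ∘ u) (restrictLine c ∘ v)) :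
    IsKernelBasis (Φ.map (Ideal.Quotient.mk (Ideal.span {linform c})))
      (Ideal.Quotient.mk (Ideal.span {linform c}) ∘ u)
      (Ideal.Quotient.mk (Ideal.span {linform c}) ∘ v) :=
  .of_ringEquiv (quotientLinformEquiv hc) h

lemma comap_restrictLine_span_singleton (hc : c 0 ≠ 0) (π : MvPolynomial (Fin 2) K) :
    (Ideal.span {π}).comap (restrictLine c) = Ideal.span {extendLine K π, linform c} := by
  have hmap : Ideal.span {π} = (Ideal.span {extendLine K π}).map (restrictLine c) := by
    rw [Ideal.map_span, Set.image_singleton, restrictLine_extendLine]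
  rw [hmap, Ideal.comap_map_of_surjective' _ (restrictLine_surjective c), ker_restrictLine hc,
    ← Ideal.span_insert]

lemma exists_X_notMem_comap_restrictLine (c : Fin 3 → K) {π : MvPolynomial (Fin 2) K}
    (hπ : Prime π) : ∃ i, X i ∉ (Ideal.span {π}).comap (restrictLine c) := by
  by_contra! h
  have hdvd (i : Fin 3) : π ∣ restrictLine c (X i) := Ideal.mem_span_singleton.1 (h i)
  have h0 : π ∣ X 0 := by simpa [restrictLine] using hdvd 1
  have h1 : π ∣ X 1 := by simpa [restrictLine] using hdvd 2
  have hX := ((hπ.dvd_prime_iff_associated X_prime).1 h0).symm.dvd.trans h1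
  rw [X_dvd_X] at hX
  exact absurd hX (by decide)

lemma comap_restrictLine_mem_minimalPrimes {ι : Type*} {u : ι → MvPolynomial (Fin 3) K}
    (hu : NoCommonPrimeFactor u) (hc : c 0 ≠ 0) {π : MvPolynomial (Fin 2) K}
    (hπ : Prime π) (hdvd : ∀ i, π ∣ restrictLine c (u i)) :
    (Ideal.span {π}).comap (restrictLine c) ∈ (Ideal.span (Set.range u)).minimalPrimes := by
  have := (Ideal.span_singleton_prime hπ.ne_zero).2 hπ
  have hprime := Ideal.comap_isPrime (restrictLine c) (Ideal.span {π})
  have hheight := hu.two_le_height_span (hu.ne_zero (X_prime (i := 0)))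
  refine Ideal.mem_minimalPrimes_of_height_le ?_ (le_trans ?_ hheight)
  · rintro _ hx
    refine Ideal.span_le.2 ?_ hx
    rintro _ ⟨i, rfl⟩
    exact Ideal.mem_span_singleton.2 (hdvd i)
  · rw [comap_restrictLine_span_singleton hc] at hprime ⊢
    refine (Ideal.height_le_spanFinrank _ hprime.ne_top).trans ?_
    have hfin := Submodule.spanFinrank_span_le_ncard_of_finite (R := MvPolynomial (Fin 3) K)
      (Set.toFinite {extendLine K π, linform c})
    exact_mod_cast hfin.trans ((Set.ncard_insert_le _ _).trans (by simp))

lemma NoCommonPrimeFactor.exists_ne_zero_forall_restrictLine {ι : Type*}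
    {u : ι → MvPolynomial (Fin 3) K} (hu : NoCommonPrimeFactor u) :
    ∃ P : MvPolynomial (Fin 3) K, P ≠ 0 ∧ ∀ c, eval c P ≠ 0 →
      c 0 ≠ 0 ∧ NoCommonPrimeFactor (restrictLine c ∘ u) := by
  let S := {p ∈ (Ideal.span (Set.range u)).minimalPrimes | ∃ i, X i ∉ p}
  have hS : S.Finite := (Ideal.finite_minimalPrimes_of_isNoetherianRing _ _).subset fun _ hp => hp.1
  obtain ⟨Q, hQ0, hQ⟩ := exists_ne_zero_forall_linform_notMem_of_finite hS fun p hp => hp.2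
  refine ⟨X 0 * Q, mul_ne_zero (X_ne_zero 0) hQ0, fun c hcPQ => ?_⟩
  rw [map_mul, eval_X] at hcPQ
  have hc := left_ne_zero_of_mul hcPQ
  refine ⟨hc, fun π hπ => ?_⟩
  by_contra! hdvd
  refine hQ c (right_ne_zero_of_mul hcPQ) ((Ideal.span {π}).comap (restrictLine c))
    ⟨comap_restrictLine_mem_minimalPrimes hu hc hπ hdvd,
      exists_X_notMem_comap_restrictLine c hπ⟩ ?_
  rw [Ideal.mem_comap, restrictLine_linform hc]
  exact zero_mem _

end GeneralLine

end

theorem statement11_general {K : Type*} [Field K] (n : ℕ) (a : Fin (n + 2) → ℤ) (b : Fin n → ℤ)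
    (Φ : Matrix (Fin n) (Fin (n + 2)) (MvPolynomial (Fin 3) K))
    (hΦ : ∀ j i, homog (Φ j i) (a i - b j)) (hfin : FiniteColength n a b Φ)
    (d d' : ℤ) (hdd' : (∑ i, a i) - (∑ j, b j) = d + d') (hle : d ≤ d' + 1)
    (hd : Nd n a Φ d ≠ ⊥) (hmin : ∀ e < d, Nd n a Φ e = ⊥) :
    ∃ P : MvPolynomial (Fin 3) K, P ≠ 0 ∧ ∀ c : Fin 3 → K, eval c P ≠ 0 →
      ∃ u v : Fin (n + 2) → MvPolynomial (Fin 3) K ⧸ Ideal.span {linform c},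
        (∃ u' ∈ degPiece (K := K) (n + 2) a d,
          ∀ i, Ideal.Quotient.mk (Ideal.span {linform c}) (u' i) = u i) ∧
        (∃ v' ∈ degPiece (K := K) (n + 2) a d',
          ∀ i, Ideal.Quotient.mk (Ideal.span {linform c}) (v' i) = v i) ∧
        (Φ.map (Ideal.Quotient.mk (Ideal.span {linform c}))).mulVec u = 0 ∧
        (Φ.map (Ideal.Quotient.mk (Ideal.span {linform c}))).mulVec v = 0 ∧
        ∀ w : Fin (n + 2) → MvPolynomial (Fin 3) K ⧸ Ideal.span {linform c},
          (Φ.map (Ideal.Quotient.mk (Ideal.span {linform c}))).mulVec w = 0 →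
          ∃! rs : (MvPolynomial (Fin 3) K ⧸ Ideal.span {linform c}) ×
              (MvPolynomial (Fin 3) K ⧸ Ideal.span {linform c}),
            w = rs.1 • u + rs.2 • v := by
  have hgr : IsGradedMatrix a b Φ := hΦ
  obtain ⟨u, hu, hu0⟩ := Submodule.exists_mem_ne_zero_of_ne_bot hd
  obtain ⟨P, hP0, hP⟩ :=
    (hgr.noCommonPrimeFactor_of_minimal hmin hu hu0).exists_ne_zero_forall_restrictLine
  refine ⟨P, hP0, fun c hcP => ?_⟩
  obtain ⟨hc, hprim⟩ := hP c hcP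
  have hsurj : IsEventuallySurjective a b (Φ.map (restrictLine c)) :=
    IsEventuallySurjective.map hfin (restrictLine_mem_homogPiece c) extendLine_mem_homogPiece
      (restrictLine_extendLine c)
  obtain ⟨v, hv, hbasis⟩ :=
    (hgr.map (restrictLine_mem_homogPiece c)).exists_isKernelBasis hsurj (by simp) hdd' hle
      (map_mem_kerPiece (restrictLine_mem_homogPiece c) hu) hprim
  have hv_ext : v = restrictLine c ∘ extendLine K ∘ v :=
    funext fun i => (restrictLine_extendLine c (v i)).symm
  obtain ⟨hker_u, hker_v, hunique⟩ := isKernelBasis_quotientMk_linform hc (hv_ext ▸ hbasis)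
  exact ⟨_, _, ⟨u, hu.1, fun _ => rfl⟩, ⟨extendLine K ∘ v, mem_gradedPiece.2 fun i =>
    extendLine_mem_homogPiece _ _ (mem_gradedPiece.1 hv.1 i), fun _ => rfl⟩,
    hker_u, hker_v, hunique⟩

set_option synthInstance.maxHeartbeats 1000000 in
/-- Suppose `a - b = 2m` is even and `N_{m-1} ≠ 0` (unstable case), with
index of instability `k = max{ j : N_{m-j} ≠ 0 }`. Then for a general linear form `L`, writing
`S = R/(L)`, the kernel of the induced map `φ̄ : ⊕ S(-a_i) → ⊕ S(-b_j)` is a free graded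
`S`-module isomorphic to `S(-(m-k)) ⊕ S(-(m+k))`: it has a free basis consisting of two
homogeneous elements, of degrees `m - k` and `m + k`. -/
theorem statement11 {K : Type*} [Field K] [IsAlgClosed K] [CharZero K]
    (n : ℕ) (a : Fin (n + 2) → ℤ) (b : Fin n → ℤ)
    (Φ : Matrix (Fin n) (Fin (n + 2)) (MvPolynomial (Fin 3) K))
    (hΦ : ∀ j i, homog (Φ j i) (a i - b j))
    (hfin : FiniteColength n a b Φ)
    (m : ℤ) (hm : (∑ i, a i) - (∑ j, b j) = 2 * m)
    (hunstable : Nd n a Φ (m - 1) ≠ ⊥)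
    (k : ℤ) (hk₁ : Nd n a Φ (m - k) ≠ ⊥) (hk₂ : ∀ j : ℤ, Nd n a Φ (m - j) ≠ ⊥ → j ≤ k) :
    ∃ P : MvPolynomial (Fin 3) K, P ≠ 0 ∧ ∀ c : Fin 3 → K, eval c P ≠ 0 →
      ∃ u v : Fin (n + 2) → MvPolynomial (Fin 3) K ⧸ Ideal.span {linform c},
        (∃ u' ∈ degPiece (K := K) (n + 2) a (m - k),
          ∀ i, Ideal.Quotient.mk (Ideal.span {linform c}) (u' i) = u i) ∧
        (∃ v' ∈ degPiece (K := K) (n + 2) a (m + k),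
          ∀ i, Ideal.Quotient.mk (Ideal.span {linform c}) (v' i) = v i) ∧
        (Φ.map (Ideal.Quotient.mk (Ideal.span {linform c}))).mulVec u = 0 ∧
        (Φ.map (Ideal.Quotient.mk (Ideal.span {linform c}))).mulVec v = 0 ∧
        ∀ w : Fin (n + 2) → MvPolynomial (Fin 3) K ⧸ Ideal.span {linform c},
          (Φ.map (Ideal.Quotient.mk (Ideal.span {linform c}))).mulVec w = 0 →
          ∃! rs : (MvPolynomial (Fin 3) K ⧸ Ideal.span {linform c}) ×
              (MvPolynomial (Fin 3) K ⧸ Ideal.span {linform c}),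
            w = rs.1 • u + rs.2 • v := by
  exact statement11_general n a b Φ hΦ hfin (m - k) (m + k) (by linarith)
    (by linarith [hk₂ 1 hunstable]) hk₁ fun e he => by_contra fun h => by
      linarith [hk₂ (m - e) (by rwa [sub_sub_cancel])]
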